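/- Let L^t = K⟨t₁,…,tₘ⟩ and L = K⟨t₁,…,tₘ,x₁,…,xₙ⟩ be free associative K-algebras, with L^t regarded as a subalgebra of L via the inclusion of generators. Let I be a two-sided ideal of L^t generated by homogeneous elements of degree 2, and let ⟨I⟩ be the two-sided ideal of L generated by I. Then the lattice Ω(L^t, I) is distributive if and only if the lattice Ω(L, ⟨I⟩) is distributive. -/

import Mathlib

noncomputable section

/-- The sublattice of the lattice of `K`-subspaces of `W` generated by a set `S` of
subspaces: the smallest collection of subspaces containing `S` and closed under
intersection and sum. -/
def sublatticeGen {K W : Type*} [Field K] [AddCommGroup W] [Module K W]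
    (S : Set (Submodule K W)) : Set (Submodule K W) :=
  ⋂₀ {T : Set (Submodule K W) | S ⊆ T ∧
    (∀ a ∈ T, ∀ b ∈ T, a ⊓ b ∈ T) ∧ (∀ a ∈ T, ∀ b ∈ T, a ⊔ b ∈ T)}

/-- A collection `S` of subspaces of `W` is distributive if the sublattice of subspaces
it generates is distributive. -/
def IsDistributiveCollection {K W : Type*} [Field K] [AddCommGroup W] [Module K W]
    (S : Set (Submodule K W)) : Prop :=
  ∀ a ∈ sublatticeGen S, ∀ b ∈ sublatticeGen S, ∀ c ∈ sublatticeGen S,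
    a ⊓ (b ⊔ c) = (a ⊓ b) ⊔ (a ⊓ c)

/-- The word-length degree-`d` component of the free algebra `K⟨y₁,…,y_s⟩` on `s`
generators: the `d`-th power of the span of the generators. -/
def wordLengthComponent (K : Type*) [Field K] (s : ℕ) (d : ℕ) :
    Submodule K (FreeAlgebra K (Fin s)) :=
  (Submodule.span K (Set.range (FreeAlgebra.ι K : Fin s → FreeAlgebra K (Fin s)))) ^ d

/-- The augmentation ideal `L₊` of the free algebra on `s` generators: the `K`-span of
all words of positive length. -/
def augIdeal (K : Type*) [Field K] (s : ℕ) : Submodule K (FreeAlgebra K (Fin s)) :=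
  ⨆ d : ℕ, wordLengthComponent K s (d + 1)

/-- The two-sided ideal of a `K`-algebra generated by a set `S`, viewed as the `K`-span
of all elements `a * s * b` with `s ∈ S`. -/
def twoSidedSpan (K : Type*) [Field K] {B : Type*} [Ring B] [Algebra K B] (S : Set B) :
    Submodule K B :=
  Submodule.span K {z : B | ∃ a s b, s ∈ S ∧ z = a * s * b}

/-- Powers of a subspace of an algebra, with the convention that the `0`-th power is the
whole algebra. -/
def latticePow {K B : Type*} [Field K] [Ring B] [Algebra K B]
    (U : Submodule K B) : ℕ → Submodule K B
  | 0 => ⊤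
  | (k + 1) => U ^ (k + 1)

/-- The generators `L₊^λ I^μ L₊^ν` of the lattice `Ω(L, I)` associated to an ideal `I`
of the free algebra `L` on `s` generators. -/
def omegaGens (K : Type*) [Field K] (s : ℕ)
    (I : Submodule K (FreeAlgebra K (Fin s))) : Set (Submodule K (FreeAlgebra K (Fin s))) :=
  {V | ∃ lam mu nu : ℕ,
    V = latticePow (augIdeal K s) lam * latticePow I mu * latticePow (augIdeal K s) nu}

namespace OmegaProof
open Module

theorem exists_adapted {K W T : Type*} [Field K] [AddCommGroup W] [Module K W]
    [DistribLattice T] (N : ℕ) :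
    ∀ (D : Submodule K W) [FiniteDimensional K D], finrank K D = N →
    ∀ f : LatticeHom T (Submodule K W), (∀ t, f t ≤ D) →
    ∃ B : Set W, LinearIndepOn K id B ∧ Submodule.span K B = D ∧
      ∀ t, f t ≤ Submodule.span K (B ∩ (f t : Set W)) := by
  induction N using Nat.strong_induction_on with
  | _ N ih =>
  intro D _ hD f hf
  have hfin : ∀ t, FiniteDimensional K (f t) := fun t =>
    Submodule.finiteDimensional_of_le (hf t)
  by_cases hne : ∃ t, f t ≠ ⊥
  swap
  · push Not at hne
    obtain ⟨B, -, hs, hl⟩ := exists_linearIndependent K (D : Set W)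
    exact ⟨B, hl, by rw [hs, Submodule.span_eq], fun t => by rw [hne t]; exact bot_le⟩
  -- an atom
  obtain ⟨t0, ht0, hmin⟩ : ∃ t0, f t0 ≠ ⊥ ∧ ∀ t, f t ≠ ⊥ → finrank K (f t0) ≤ finrank K (f t) := by
    classical
    obtain ⟨t0, h0, h1⟩ := exists_minimalFor_of_wellFoundedLT (fun t => f t ≠ ⊥)
      (fun t => finrank K (f t)) hne
    refine ⟨t0, h0, fun t ht => ?_⟩
    by_contra hlt
    exact hlt (h1 ht (le_of_not_ge hlt))
  have hdich : ∀ t, Disjoint (f t) (f t0) ∨ f t0 ≤ f t := by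
    intro t
    by_cases h : f (t ⊓ t0) = ⊥
    · left
      rw [map_inf] at h
      exact disjoint_iff.mpr h
    · right
      have h1 := hmin _ h
      have h2 : f (t ⊓ t0) ≤ f t0 := by rw [map_inf]; exact inf_le_right
      have h3 := Submodule.eq_of_le_of_finrank_le h2 h1
      rw [← h3, map_inf]; exact inf_le_left
  let C : Submodule K W := sSup {c | ∃ t, c = f t ∧ Disjoint (f t) (f t0)}
  have hC : Disjoint C (f t0) := by
    have hdir : DirectedOn (· ≤ ·) {c | ∃ t, c = f t ∧ Disjoint (f t) (f t0)} := by
      rintro _ ⟨t, rfl, ht⟩ _ ⟨u, rfl, hu⟩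
      refine ⟨f (t ⊔ u), ⟨_, rfl, ?_⟩, by simp, by simp⟩
      rw [disjoint_iff, ← map_inf, inf_sup_right, map_sup, map_inf, map_inf,
        disjoint_iff.mp ht, disjoint_iff.mp hu, sup_bot_eq]
    rw [disjoint_comm]
    rw [hdir.disjoint_sSup_right]
    rintro _ ⟨t, rfl, ht⟩
    exact ht.symm
  obtain ⟨C', hCC', hcompl⟩ := hC.exists_isCompl
  have hd2 : ∀ t, f t ≤ C' ∨ f t0 ≤ f t := fun t => (hdich t).imp_left fun h =>
    le_trans (show f t ≤ C from le_sSup ⟨t, rfl, h⟩) hCC'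
  have hdec : ∀ U : Submodule K W, f t0 ≤ U → U = f t0 ⊔ (C' ⊓ U) := fun U hU => by
    rw [← sup_inf_assoc_of_le _ hU, sup_comm, hcompl.sup_eq_top, top_inf_eq]
  have hdec2 : ∀ U : Submodule K W, U ≤ C' → (f t0 ⊔ U) ⊓ C' = U := fun U hU => by
    rw [sup_comm, sup_inf_assoc_of_le _ hU, inf_comm (f t0), hcompl.inf_eq_bot, sup_bot_eq]
  have hsup : ∀ s t, (f s ⊔ f t) ⊓ C' = (f s ⊓ C') ⊔ (f t ⊓ C') := by
    intro s t
    have key : ∀ s t, f t0 ≤ f s → (f s ⊔ f t) ⊓ C' = (f s ⊓ C') ⊔ (f t ⊓ C') := by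
      intro s t hs
      have e1 : f s ⊔ f t = f t0 ⊔ ((f s ⊓ C') ⊔ (f t ⊓ C')) := by
        rcases hd2 t with ht | ht
        · rw [inf_eq_left.mpr ht, ← sup_assoc, inf_comm (f s), ← hdec _ hs]
        · conv_lhs => rw [hdec _ hs, hdec _ ht]
          rw [inf_comm (f s), inf_comm (f t), ← sup_sup_distrib_left]
      rw [e1, hdec2 _ (sup_le inf_le_right inf_le_right)]
    rcases hd2 s with hs | hs
    · rcases hd2 t with ht | ht
      · rw [inf_eq_left.mpr hs, inf_eq_left.mpr ht, inf_eq_left.mpr (sup_le hs ht)]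
      · rw [sup_comm, key t s ht, sup_comm]
    · exact key s t hs
  let g : LatticeHom T (Submodule K W) :=
    { toFun := fun t => f t ⊓ C'
      map_sup' := fun s t => by rw [map_sup, hsup]
      map_inf' := fun s t => by rw [map_inf, inf_inf_distrib_right] }
  have : FiniteDimensional K (D ⊓ C' : Submodule K W) :=
    Submodule.finiteDimensional_of_le inf_le_left
  have hlt : finrank K (D ⊓ C' : Submodule K W) < N := by
    rw [← hD]
    apply Submodule.finrank_lt_finrank_of_lt
    refine lt_of_le_of_ne inf_le_left fun h => ht0 ?_
    have : D ≤ C' := inf_eq_left.mp h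
    have h2 := hcompl.inf_eq_bot
    rwa [inf_eq_right.mpr ((hf t0).trans this)] at h2
  obtain ⟨B', hl', hs', hB'⟩ := ih _ hlt (D ⊓ C') rfl g (fun t => inf_le_inf_right _ (hf t))
  obtain ⟨B0, hsub0, hs0, hl0⟩ := exists_linearIndependent K (f t0 : Set W)
  rw [Submodule.span_eq] at hs0
  refine ⟨B0 ∪ B', ?_, ?_, ?_⟩
  · refine LinearIndepOn.union hl0 hl' ?_
    simp only [id, Set.image_id']
    rw [hs0, hs']
    exact hcompl.symm.disjoint.mono_right inf_le_right
  · rw [Submodule.span_union, hs0, hs', inf_comm, ← hdec _ (hf t0)]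
  · intro t
    have h1 : g t ≤ Submodule.span K ((B0 ∪ B') ∩ (f t : Set W)) := by
      refine (hB' t).trans (Submodule.span_mono ?_)
      rintro x ⟨hx, hx'⟩
      exact ⟨Or.inr hx, hx'.1⟩
    rcases hd2 t with ht | ht
    · exact (le_inf le_rfl ht).trans h1
    · rw [hdec _ ht]
      refine sup_le ?_ ?_
      · rw [← hdec _ ht]
        conv_lhs => rw [← hs0]
        refine Submodule.span_mono fun x hx => ⟨Or.inl hx, ht (hsub0 hx)⟩
      · rw [← hdec _ ht, inf_comm]; exact h1

/-- induction principle for the generated sublattice -/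
theorem sublatticeGen_induction {K W : Type*} [Field K] [AddCommGroup W] [Module K W]
    {S : Set (Submodule K W)} {p : Submodule K W → Prop} (h0 : ∀ a ∈ S, p a)
    (hi : ∀ a b, p a → p b → p (a ⊓ b)) (hs : ∀ a b, p a → p b → p (a ⊔ b)) :
    ∀ a ∈ sublatticeGen S, p a := fun _ ha =>
  ha {a | p a} ⟨h0, fun a ha b hb => hi a b ha hb, fun a ha b hb => hs a b ha hb⟩

theorem subset_gen {K W : Type*} [Field K] [AddCommGroup W] [Module K W]
    {S : Set (Submodule K W)} {a : Submodule K W} (h : a ∈ S) : a ∈ sublatticeGen S :=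
  fun _ hT => hT.1 h

theorem inf_gen {K W : Type*} [Field K] [AddCommGroup W] [Module K W]
    {S : Set (Submodule K W)} {a b : Submodule K W} (h : a ∈ sublatticeGen S)
    (h' : b ∈ sublatticeGen S) : a ⊓ b ∈ sublatticeGen S :=
  fun T hT => hT.2.1 a (h T hT) b (h' T hT)

theorem sup_gen {K W : Type*} [Field K] [AddCommGroup W] [Module K W]
    {S : Set (Submodule K W)} {a b : Submodule K W} (h : a ∈ sublatticeGen S)
    (h' : b ∈ sublatticeGen S) : a ⊔ b ∈ sublatticeGen S :=
  fun T hT => hT.2.2 a (h T hT) b (h' T hT)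

/-- spanned by a subset of the basis -/
def Adapted {K W ι : Type*} [Field K] [AddCommGroup W] [Module K W] (b : Basis ι K W)
    (U : Submodule K W) : Prop := ∃ T : Set ι, U = Submodule.span K (b '' T)

theorem span_basis_eq {K W ι : Type*} [Field K] [AddCommGroup W] [Module K W] (b : Basis ι K W)
    (T : Set ι) : Submodule.span K (b '' T) =
      (Finsupp.supported K K T).map (b.repr.symm : (ι →₀ K) →ₗ[K] W) := by
  rw [Finsupp.supported_eq_span_single, Submodule.map_span]
  congr 1
  rw [← Set.image_comp]
  refine Set.image_congr fun i _ => ?_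
  simp

theorem span_basis_inter {K W ι : Type*} [Field K] [AddCommGroup W] [Module K W] (b : Basis ι K W)
    (S T : Set ι) : Submodule.span K (b '' (S ∩ T)) =
      Submodule.span K (b '' S) ⊓ Submodule.span K (b '' T) := by
  simp only [span_basis_eq]
  rw [Finsupp.supported_inter, Submodule.map_inf]
  exact b.repr.symm.injective

theorem span_basis_union {K W ι : Type*} [Field K] [AddCommGroup W] [Module K W] (b : Basis ι K W)
    (S T : Set ι) : Submodule.span K (b '' (S ∪ T)) =
      Submodule.span K (b '' S) ⊔ Submodule.span K (b '' T) := by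
  rw [Set.image_union, Submodule.span_union]

theorem distrib_of_adapted {K W ι : Type*} [Field K] [AddCommGroup W] [Module K W]
    (b : Basis ι K W) (S : Set (Submodule K W)) (h : ∀ U ∈ S, Adapted b U) :
    IsDistributiveCollection S := by
  have key : ∀ a ∈ sublatticeGen S, Adapted b a := by
    refine sublatticeGen_induction h ?_ ?_
    · rintro _ _ ⟨S, rfl⟩ ⟨T, rfl⟩
      exact ⟨S ∩ T, (span_basis_inter b S T).symm⟩
    · rintro _ _ ⟨S, rfl⟩ ⟨T, rfl⟩
      exact ⟨S ∪ T, (span_basis_union b S T).symm⟩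
  intro x hx y hy z hz
  obtain ⟨X, rfl⟩ := key x hx
  obtain ⟨Y, rfl⟩ := key y hy
  obtain ⟨Z, rfl⟩ := key z hz
  rw [← span_basis_union, ← span_basis_inter, ← span_basis_inter, ← span_basis_inter,
    ← span_basis_union, Set.inter_union_distrib_left]

theorem Adapted.iSup {K W ι : Type*} [Field K] [AddCommGroup W] [Module K W] {b : Basis ι K W}
    {κ : Sort*} {U : κ → Submodule K W} (h : ∀ k, Adapted b (U k)) : Adapted b (⨆ k, U k) := by
  choose T hT using h
  refine ⟨⋃ k, T k, ?_⟩
  rw [Set.image_iUnion, Submodule.span_iUnion]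
  exact iSup_congr hT

theorem Adapted.sup {K W ι : Type*} [Field K] [AddCommGroup W] [Module K W] {b : Basis ι K W}
    {U V : Submodule K W} (hU : Adapted b U) (hV : Adapted b V) : Adapted b (U ⊔ V) := by
  obtain ⟨S, rfl⟩ := hU
  obtain ⟨T, rfl⟩ := hV
  exact ⟨S ∪ T, (span_basis_union b S T).symm⟩

end OmegaProof
namespace OmegaProof
open Module

/-- the word attached to a list of letters -/
def word (K : Type*) [Field K] {s : ℕ} (l : List (Fin s)) : FreeAlgebra K (Fin s) :=
  (l.map (FreeAlgebra.ι K)).prod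

/-- the basis of words -/
def wB (K : Type*) [Field K] (s : ℕ) : Basis (List (Fin s)) K (FreeAlgebra K (Fin s)) :=
  (FreeAlgebra.basisFreeMonoid K (Fin s)).reindex FreeMonoid.toList

theorem wB_apply (K : Type*) [Field K] (s : ℕ) (l : List (Fin s)) : wB K s l = word K l := by
  simp [wB, FreeAlgebra.basisFreeMonoid, word, FreeAlgebra.equivMonoidAlgebraFreeMonoid,
    FreeMonoid.lift_apply]

variable {K : Type*} [Field K] {s : ℕ}

theorem word_nil : word K ([] : List (Fin s)) = 1 := rfl

theorem word_cons (i : Fin s) (l) : word K (i :: l) = FreeAlgebra.ι K i * word K l := by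
  simp [word]

theorem word_append (l l' : List (Fin s)) : word K (l ++ l') = word K l * word K l' := by
  simp [word]

theorem span_words : Submodule.span K (Set.range (word K (s := s))) = ⊤ := by
  rw [← (wB K s).span_eq]
  congr 2
  ext l
  rw [wB_apply]

/-- degree one -/
abbrev L1 (K : Type*) [Field K] (s : ℕ) : Submodule K (FreeAlgebra K (Fin s)) :=
  Submodule.span K (Set.range (FreeAlgebra.ι K : Fin s → FreeAlgebra K (Fin s)))

theorem ι_mem (i : Fin s) : FreeAlgebra.ι K i ∈ L1 K s := Submodule.subset_span ⟨i, rfl⟩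

theorem word_mem (l : List (Fin s)) : word K l ∈ L1 K s ^ l.length := by
  induction l with
  | nil => simp [word_nil]
  | cons i l ih =>
    rw [word_cons, List.length_cons, pow_succ']
    exact Submodule.mul_mem_mul (ι_mem i) ih

/-- a left L1-stable subspace containing 1 is everything -/
theorem eq_top_of_left {U : Submodule K (FreeAlgebra K (Fin s))} (h1 : 1 ∈ U)
    (h : L1 K s * U ≤ U) : U = ⊤ := by
  rw [eq_top_iff, ← span_words, Submodule.span_le]
  rintro _ ⟨l, rfl⟩
  induction l with
  | nil => exact h1
  | cons i l ih =>
    rw [word_cons]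
    exact h (Submodule.mul_mem_mul (ι_mem i) ih)

theorem iSup_pow_L1 : ⨆ d, L1 K s ^ d = ⊤ := by
  apply eq_top_of_left
  · exact Submodule.mem_iSup_of_mem 0 (by simp)
  · rw [Submodule.mul_iSup]
    refine iSup_le fun d => ?_
    rw [← pow_succ']
    exact le_iSup (fun d => L1 K s ^ d) (d + 1)

theorem top_mul_top : (⊤ : Submodule K (FreeAlgebra K (Fin s))) * ⊤ = ⊤ := by
  rw [eq_top_iff]
  intro x _
  rw [← mul_one x]
  exact Submodule.mul_mem_mul trivial trivial

theorem augIdeal_eq_left : augIdeal K s = L1 K s * ⊤ := by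
  rw [← iSup_pow_L1, Submodule.mul_iSup]
  exact iSup_congr fun d => by rw [wordLengthComponent, pow_succ']

theorem augIdeal_eq_right : augIdeal K s = ⊤ * L1 K s := by
  rw [← iSup_pow_L1, Submodule.iSup_mul]
  exact iSup_congr fun d => by rw [wordLengthComponent, pow_succ]

theorem top_pow (k : ℕ) : (⊤ : Submodule K (FreeAlgebra K (Fin s))) ^ (k + 1) = ⊤ := by
  induction k with
  | zero => simp
  | succ k ih => rw [pow_succ, ih, top_mul_top]

theorem commute_L1_top : Commute (L1 K s) ⊤ := by
  rw [Commute, SemiconjBy, ← augIdeal_eq_left, augIdeal_eq_right]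

theorem latticePow_aug_left (k : ℕ) : latticePow (augIdeal K s) k = L1 K s ^ k * ⊤ := by
  cases k with
  | zero => simp [latticePow]
  | succ k => rw [latticePow, augIdeal_eq_left, commute_L1_top.mul_pow, top_pow]

theorem latticePow_aug_right (k : ℕ) : latticePow (augIdeal K s) k = ⊤ * L1 K s ^ k := by
  rw [latticePow_aug_left, (commute_L1_top.pow_left k).eq]

/-- two-sided ideals -/
def Ideal2 (U : Submodule K (FreeAlgebra K (Fin s))) : Prop := ⊤ * U = U ∧ U * ⊤ = U

theorem Ideal2.latticePow {U : Submodule K (FreeAlgebra K (Fin s))} (h : Ideal2 U) (k : ℕ) :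
    Ideal2 (latticePow U k) := by
  cases k with
  | zero => exact ⟨top_mul_top, top_mul_top⟩
  | succ k =>
    refine ⟨?_, ?_⟩
    · rw [_root_.latticePow, pow_succ', ← mul_assoc, h.1]
    · rw [_root_.latticePow, pow_succ, mul_assoc, h.2]

theorem twoSidedSpan_eq (S : Set (FreeAlgebra K (Fin s))) :
    twoSidedSpan K S = ⊤ * Submodule.span K S * ⊤ := by
  apply le_antisymm
  · rw [twoSidedSpan, Submodule.span_le]
    rintro _ ⟨a, x, b, hx, rfl⟩
    exact Submodule.mul_mem_mul (Submodule.mul_mem_mul trivial (Submodule.subset_span hx)) trivial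
  · conv_lhs => rw [← Submodule.span_univ, Submodule.span_mul_span, Submodule.span_mul_span]
    rw [Submodule.span_le]
    rintro _ ⟨_, ⟨a, -, x, hx, rfl⟩, b, -, rfl⟩
    exact Submodule.subset_span ⟨a, x, b, hx, rfl⟩

theorem ideal2_twoSidedSpan (S : Set (FreeAlgebra K (Fin s))) : Ideal2 (twoSidedSpan K S) := by
  rw [twoSidedSpan_eq]
  refine ⟨?_, ?_⟩
  · rw [← mul_assoc, ← mul_assoc, top_mul_top]
  · rw [mul_assoc _ ⊤ ⊤, top_mul_top]

theorem omega_gen_eq {I : Submodule K (FreeAlgebra K (Fin s))} (h : Ideal2 I) (a b c : ℕ) :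
    latticePow (augIdeal K s) a * latticePow I b * latticePow (augIdeal K s) c =
      L1 K s ^ a * latticePow I b * L1 K s ^ c := by
  have h2 := h.latticePow b
  rw [latticePow_aug_left a, latticePow_aug_right c, mul_assoc _ ⊤ (latticePow I b), h2.1,
    ← mul_assoc, mul_assoc _ (latticePow I b) ⊤, h2.2]

/-! grading -/

/-- the grading homomorphism -/
def psi (K : Type*) [Field K] (s : ℕ) :
    FreeAlgebra K (Fin s) →ₐ[K] Polynomial (FreeAlgebra K (Fin s)) :=
  FreeAlgebra.lift K fun i => Polynomial.monomial 1 (FreeAlgebra.ι K i)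

theorem psi_of_mem {d : ℕ} {x : FreeAlgebra K (Fin s)} (hx : x ∈ L1 K s ^ d) :
    psi K s x = Polynomial.monomial d x := by
  induction hx using Submodule.pow_induction_on_left' with
  | algebraMap r =>
    rw [AlgHom.commutes]; rfl
  | add x y i hx hy h1 h2 => rw [map_add, h1, h2, map_add]
  | mem_mul m hm i x hx ih =>
    have : psi K s m = Polynomial.monomial 1 m := by
      induction hm using Submodule.span_induction with
      | mem x h => obtain ⟨i, rfl⟩ := h; simp [psi]
      | zero => simp
      | add x y _ _ h1 h2 => rw [map_add, h1, h2, map_add]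
      | smul r x _ h => rw [map_smul, h, Polynomial.smul_monomial]
    rw [map_mul, this, ih, Polynomial.monomial_mul_monomial, add_comm]

/-- homogeneous components -/
def pr (K : Type*) [Field K] (s d : ℕ) : FreeAlgebra K (Fin s) →ₗ[K] FreeAlgebra K (Fin s) :=
  ((Polynomial.lcoeff (FreeAlgebra K (Fin s)) d).restrictScalars K) ∘ₗ (psi K s).toLinearMap

theorem pr_of_mem {d : ℕ} {x : FreeAlgebra K (Fin s)} (hx : x ∈ L1 K s ^ d) (e : ℕ) :
    pr K s e x = if d = e then x else 0 := by
  simp [pr, psi_of_mem hx, Polynomial.coeff_monomial]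

/-- homogeneous subspaces -/
def Hom (U : Submodule K (FreeAlgebra K (Fin s))) : Prop :=
  ∃ S : Set (FreeAlgebra K (Fin s)), (∀ x ∈ S, ∃ d, x ∈ L1 K s ^ d) ∧ U = Submodule.span K S

theorem hom_top : Hom (⊤ : Submodule K (FreeAlgebra K (Fin s))) :=
  ⟨Set.range (word K), by rintro _ ⟨l, rfl⟩; exact ⟨_, word_mem l⟩, span_words.symm⟩

theorem hom_pow (d : ℕ) : Hom (L1 K s ^ d) :=
  ⟨(L1 K s ^ d : Submodule K _), fun _ hx => ⟨d, hx⟩, (Submodule.span_eq _).symm⟩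

theorem Hom.mul {U V : Submodule K (FreeAlgebra K (Fin s))} (hU : Hom U) (hV : Hom V) :
    Hom (U * V) := by
  obtain ⟨S, hS, rfl⟩ := hU
  obtain ⟨T, hT, rfl⟩ := hV
  refine ⟨_, ?_, Submodule.span_mul_span K S T⟩
  rintro _ ⟨x, hx, y, hy, rfl⟩
  obtain ⟨d, hd⟩ := hS x hx
  obtain ⟨e, he⟩ := hT y hy
  exact ⟨d + e, by rw [pow_add]; exact Submodule.mul_mem_mul hd he⟩

theorem Hom.latticePow {U : Submodule K (FreeAlgebra K (Fin s))} (h : Hom U) (k : ℕ) :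
    Hom (latticePow U k) := by
  cases k with
  | zero => exact hom_top
  | succ k =>
    rw [_root_.latticePow]
    induction k with
    | zero => simpa using h
    | succ k ih => rw [pow_succ]; exact ih.mul h

theorem Hom.pr_mem {U : Submodule K (FreeAlgebra K (Fin s))} (h : Hom U) (d : ℕ)
    {x} (hx : x ∈ U) : pr K s d x ∈ U := by
  obtain ⟨S, hS, rfl⟩ := h
  have : Submodule.span K S ≤ (Submodule.span K S).comap (pr K s d) := by
    rw [Submodule.span_le]
    intro y hy
    obtain ⟨e, he⟩ := hS y hy
    simp only [Submodule.comap_coe, Set.mem_preimage, pr_of_mem he]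
    split_ifs
    · exact Submodule.subset_span hy
    · exact Submodule.zero_mem _
  exact this hx

theorem pr_mem_pow (d : ℕ) (x : FreeAlgebra K (Fin s)) : pr K s d x ∈ L1 K s ^ d := by
  have : (⊤ : Submodule K _) ≤ (L1 K s ^ d).comap (pr K s d) := by
    rw [← span_words, Submodule.span_le]
    rintro _ ⟨l, rfl⟩
    simp only [Submodule.comap_coe, Set.mem_preimage, pr_of_mem (word_mem l)]
    split_ifs with h
    · exact h ▸ word_mem l
    · exact Submodule.zero_mem _
  exact this trivial

theorem eq_sum_pr (x : FreeAlgebra K (Fin s)) :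
    ∃ N, ∀ M, N ≤ M → x = ∑ d ∈ Finset.range M, pr K s d x := by
  have hx : x ∈ Submodule.span K (Set.range (word K (s := s))) := by rw [span_words]; trivial
  induction hx using Submodule.span_induction with
  | mem x h =>
    obtain ⟨l, rfl⟩ := h
    refine ⟨l.length + 1, fun M hM => ?_⟩
    simp only [pr_of_mem (word_mem l)]
    rw [Finset.sum_ite_eq, if_pos (by simp; omega)]
  | zero => exact ⟨0, fun M _ => by simp⟩
  | add x y _ _ h1 h2 =>
    obtain ⟨N, hN⟩ := h1
    obtain ⟨N', hN'⟩ := h2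
    refine ⟨max N N', fun M hM => ?_⟩
    simp only [map_add, Finset.sum_add_distrib]
    rw [← hN M (by omega), ← hN' M (by omega)]
  | smul r x _ h =>
    obtain ⟨N, hN⟩ := h
    refine ⟨N, fun M hM => ?_⟩
    simp only [map_smul, ← Finset.smul_sum]
    rw [← hN M hM]

theorem isInternal_pow : DirectSum.IsInternal (fun d => L1 K s ^ d) := by
  apply DirectSum.isInternal_submodule_of_iSupIndep_of_iSup_eq_top _ iSup_pow_L1
  intro d
  rw [Submodule.disjoint_def]
  intro x hx hx'
  have h1 := pr_of_mem hx d
  rw [if_pos rfl] at h1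
  rw [← h1]
  have : (⨆ j, ⨆ (_ : j ≠ d), L1 K s ^ j) ≤ LinearMap.ker (pr K s d) := by
    refine iSup₂_le fun j hj y hy => ?_
    rw [LinearMap.mem_ker, pr_of_mem hy, if_neg hj]
  exact this hx'

theorem exists_basis (I : Submodule K (FreeAlgebra K (Fin s))) (h2 : Ideal2 I) (hI : Hom I)
    (hd : IsDistributiveCollection (omegaGens K s I)) :
    ∃ b : Basis (List (Fin s)) K (FreeAlgebra K (Fin s)),
      (∀ d, Adapted b (L1 K s ^ d)) ∧
      ∀ x y z, Adapted b (L1 K s ^ x * latticePow I y * L1 K s ^ z) := by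
  let T : Sublattice (Submodule K (FreeAlgebra K (Fin s))) :=
    { carrier := sublatticeGen (omegaGens K s I)
      supClosed' := fun _ ha _ hb => sup_gen ha hb
      infClosed' := fun _ ha _ hb => inf_gen ha hb }
  let _ : DistribLattice T := DistribLattice.ofInfSupLe fun a b c =>
    le_of_eq (Subtype.ext (hd a a.2 b b.2 c c.2))
  have hgr : ∀ U ∈ sublatticeGen (omegaGens K s I), ∀ d, ∀ x ∈ U, pr K s d x ∈ U := by
    refine sublatticeGen_induction ?_ ?_ ?_
    · rintro _ ⟨x, y, z, rfl⟩ d v hv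
      rw [omega_gen_eq h2] at hv ⊢
      exact (((hom_pow x).mul (hI.latticePow y)).mul (hom_pow z)).pr_mem d hv
    · intro a b ha hb d x hx
      exact ⟨ha d x hx.1, hb d x hx.2⟩
    · intro a b ha hb d x hx
      obtain ⟨y, hy, z, hz, rfl⟩ := Submodule.mem_sup.mp hx
      rw [map_add]
      exact Submodule.add_mem_sup (ha d y hy) (hb d z hz)
  let f : ∀ _ : ℕ, LatticeHom T (Submodule K (FreeAlgebra K (Fin s))) := fun d =>
    { toFun := fun t => t.1 ⊓ L1 K s ^ d
      map_sup' := fun a b => by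
        apply le_antisymm
        · rintro x ⟨hx, hxd⟩
          obtain ⟨y, hy, z, hz, rfl⟩ := Submodule.mem_sup.mp hx
          have h1 := pr_of_mem hxd d
          rw [if_pos rfl] at h1
          rw [← h1, map_add]
          exact Submodule.add_mem_sup ⟨hgr _ a.2 d y hy, pr_mem_pow d y⟩
            ⟨hgr _ b.2 d z hz, pr_mem_pow d z⟩
        · exact sup_le (inf_le_inf_right _ (le_sup_left (a := a.1)))
            (inf_le_inf_right _ (le_sup_right (a := a.1)))
      map_inf' := fun a b => inf_inf_distrib_right _ _ _ }
  have hfd : ∀ d, FiniteDimensional K (L1 K s ^ d : Submodule K (FreeAlgebra K (Fin s))) := by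
    intro d
    have : (L1 K s).FG := Submodule.fg_span (Set.finite_range _)
    exact Module.Finite.iff_fg.mpr (this.pow d)
  have hB := fun d => exists_adapted _ (L1 K s ^ d) rfl (f d) (fun t => inf_le_right)
  choose B hl hs hB using hB
  let c : ∀ d, Basis (B d) K (L1 K s ^ d : Submodule K (FreeAlgebra K (Fin s))) := fun d =>
    (Basis.span (hl d)).map (LinearEquiv.ofEq _ _ (by rw [← hs d]; simp))
  have hc : ∀ d (x : B d), ((c d x : _) : FreeAlgebra K (Fin s)) = x := by
    intro d x
    simp only [c, Basis.map_apply, LinearEquiv.coe_ofEq_apply]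
    exact congrArg Subtype.val (Basis.span_apply (hl d) x)
  let b0 := isInternal_pow.collectedBasis c
  have hb0 : ∀ i, b0 i = i.2 := by
    intro i
    simp [b0, hc]
  let b := b0.reindex (b0.indexEquiv (wB K s))
  have hr : ∀ d, ∀ x ∈ B d, ∃ i, b i = x := by
    intro d x hx
    exact ⟨b0.indexEquiv (wB K s) ⟨d, x, hx⟩, by simp [b, hb0]⟩
  have key : ∀ U : Submodule K (FreeAlgebra K (Fin s)),
      U ≤ Submodule.span K ((⋃ d, B d) ∩ (U : Set _)) → Adapted b U := by
    intro U hU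
    refine ⟨{i | b i ∈ U}, le_antisymm (hU.trans (Submodule.span_mono ?_)) ?_⟩
    · rintro x ⟨hx, hxU⟩
      obtain ⟨d, hx⟩ := Set.mem_iUnion.mp hx
      obtain ⟨i, rfl⟩ := hr d x hx
      exact ⟨i, hxU, rfl⟩
    · rw [Submodule.span_le]
      rintro _ ⟨i, hi, rfl⟩
      exact hi
  refine ⟨b, fun d => key _ ?_, fun x y z => key _ ?_⟩
  · conv_lhs => rw [← hs d]
    refine Submodule.span_mono fun x hx => ⟨Set.mem_iUnion.mpr ⟨d, hx⟩, ?_⟩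
    rw [← hs d]
    exact Submodule.subset_span hx
  · set U := L1 K s ^ x * latticePow I y * L1 K s ^ z with hU
    have hUm : U ∈ sublatticeGen (omegaGens K s I) := by
      rw [hU, ← omega_gen_eq h2]
      exact subset_gen ⟨x, y, z, rfl⟩
    intro v hv
    obtain ⟨N, hN⟩ := eq_sum_pr v
    rw [hN N le_rfl]
    refine Submodule.sum_mem _ fun d _ => ?_
    have h1 := hB d ⟨U, hUm⟩ (show pr K s d v ∈ U ⊓ L1 K s ^ d from
      ⟨hgr U hUm d v hv, pr_mem_pow d v⟩)
    refine Submodule.span_mono ?_ h1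
    rintro w ⟨hw, hw'⟩
    exact ⟨Set.mem_iUnion.mpr ⟨d, hw⟩, hw'.1⟩

end OmegaProof
namespace OmegaProof
open Module

variable {K : Type*} [Field K] {m n : ℕ}

/-- the inclusion of the free algebras -/
abbrev phi (K : Type*) [Field K] (m n : ℕ) :
    FreeAlgebra K (Fin m) →ₐ[K] FreeAlgebra K (Fin (m + n)) :=
  FreeAlgebra.lift K fun k : Fin m => FreeAlgebra.ι K (Fin.castAdd n k)

/-- the inclusion on subspaces -/
abbrev Phi {K : Type*} [Field K] {m : ℕ} (n : ℕ) (U : Submodule K (FreeAlgebra K (Fin m))) :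
    Submodule K (FreeAlgebra K (Fin (m + n))) := U.map (phi K m n).toLinearMap

/-- the span of the new variables -/
def XX (K : Type*) [Field K] (m n : ℕ) : Submodule K (FreeAlgebra K (Fin (m + n))) :=
  Submodule.span K (Set.range fun j : Fin n => FreeAlgebra.ι K (Fin.natAdd m j))

theorem phi_ι (k : Fin m) : phi K m n (FreeAlgebra.ι K k) = FreeAlgebra.ι K (Fin.castAdd n k) := by
  simp

theorem Phi_mul (U V : Submodule K (FreeAlgebra K (Fin m))) :
    Phi n (U * V) = Phi n U * Phi n V := Submodule.map_mul _ _ _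

theorem Phi_one : Phi n (1 : Submodule K (FreeAlgebra K (Fin m))) = 1 := Submodule.map_one _

theorem L1_add : L1 K (m + n) = Phi n (L1 K m) ⊔ XX K m n := by
  rw [Phi, Submodule.map_span, XX, ← Submodule.span_union]
  refine congrArg (Submodule.span K) ?_
  ext x
  constructor
  · rintro ⟨i, rfl⟩
    refine Fin.addCases (fun k => Or.inl ?_) (fun j => Or.inr ⟨j, rfl⟩) i
    exact ⟨_, ⟨k, rfl⟩, phi_ι k⟩
  · rintro (⟨_, ⟨k, rfl⟩, rfl⟩ | ⟨j, rfl⟩)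
    · exact ⟨Fin.castAdd n k, (phi_ι k).symm⟩
    · exact ⟨_, rfl⟩

/-- sums of products of slots separated by new variables -/
inductive Q (n : ℕ) (S : Set (Submodule K (FreeAlgebra K (Fin m)))) :
    Submodule K (FreeAlgebra K (Fin (m + n))) → Prop
  | base (U) (hU : U ∈ S) : Q n S (Phi n U)
  | cons (U V) (hU : U ∈ S) (hV : Q n S V) : Q n S (Phi n U * XX K m n * V)
  | sup (U V) (hU : Q n S U) (hV : Q n S V) : Q n S (U ⊔ V)
  | iSup (U : ℕ → Submodule K (FreeAlgebra K (Fin (m + n)))) (hU : ∀ k, Q n S (U k)) :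
      Q n S (⨆ k, U k)

variable {S S' : Set (Submodule K (FreeAlgebra K (Fin m)))}
  {V : Submodule K (FreeAlgebra K (Fin (m + n)))}

theorem Q.mono (h : S ⊆ S') (hV : Q n S V) : Q n S' V := by
  induction hV with
  | base U hU => exact .base U (h hU)
  | cons U V hU _ ih => exact .cons U V (h hU) ih
  | sup U V _ _ h1 h2 => exact .sup _ _ h1 h2
  | iSup U _ ih => exact .iSup U ih

theorem Q.mul_phi {W : Submodule K (FreeAlgebra K (Fin m))} (h : ∀ U ∈ S, U * W ∈ S)
    (hV : Q n S V) : Q n S (V * Phi n W) := by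
  induction hV with
  | base U hU => rw [← Phi_mul]; exact .base _ (h U hU)
  | cons U V hU _ ih => rw [mul_assoc]; exact .cons U _ hU ih
  | sup U V _ _ h1 h2 => rw [Submodule.sup_mul]; exact .sup _ _ h1 h2
  | iSup U _ ih => rw [Submodule.iSup_mul]; exact .iSup _ ih

theorem Q.phi_mul {W : Submodule K (FreeAlgebra K (Fin m))} (h : ∀ U ∈ S, W * U ∈ S)
    (hV : Q n S V) : Q n S (Phi n W * V) := by
  induction hV with
  | base U hU => rw [← Phi_mul]; exact .base _ (h U hU)
  | cons U V hU hV ih =>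
    rw [← mul_assoc, ← mul_assoc, ← Phi_mul]; exact .cons _ _ (h U hU) hV
  | sup U V _ _ h1 h2 => rw [Submodule.mul_sup]; exact .sup _ _ h1 h2
  | iSup U _ ih => rw [Submodule.mul_iSup]; exact .iSup _ ih

theorem Q.mul_X {W : Submodule K (FreeAlgebra K (Fin m))} (h : W ∈ S)
    (hV : Q n S V) : Q n S (V * (XX K m n * Phi n W)) := by
  induction hV with
  | base U hU => rw [← mul_assoc]; exact .cons _ _ hU (.base _ h)
  | cons U V hU hV ih =>
    rw [mul_assoc]; exact .cons _ _ hU ih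
  | sup U V _ _ h1 h2 => rw [Submodule.sup_mul]; exact .sup _ _ h1 h2
  | iSup U _ ih => rw [Submodule.iSup_mul]; exact .iSup _ ih

theorem top_eq : (⊤ : Submodule K (FreeAlgebra K (Fin (m + n)))) =
    ⨆ k : ℕ, Phi n ⊤ * (XX K m n * Phi n ⊤) ^ k := by
  have h1 : (1 : FreeAlgebra K (Fin (m + n))) ∈ Phi n (⊤ : Submodule K (FreeAlgebra K (Fin m))) :=
    ⟨1, trivial, map_one (phi K m n)⟩
  symm
  apply eq_top_of_left
  · exact Submodule.mem_iSup_of_mem 0 (by simpa using h1)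
  · rw [Submodule.mul_iSup]
    refine iSup_le fun k => ?_
    rw [L1_add, Submodule.sup_mul]
    refine sup_le ?_ ?_
    · rw [← mul_assoc, ← Phi_mul]
      refine le_trans ?_ (le_iSup _ k)
      exact mul_le_mul' (Submodule.map_mono le_top) le_rfl
    · rw [← mul_assoc, ← pow_succ']
      refine le_trans ?_ (le_iSup _ (k + 1))
      intro x hx
      rw [← one_mul x]
      exact Submodule.mul_mem_mul h1 hx

theorem Q.mul_top (h : ∀ U ∈ S, U * ⊤ ∈ S) (ht : ⊤ ∈ S) (hV : Q n S V) : Q n S (V * ⊤) := by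
  rw [top_eq, Submodule.mul_iSup]
  refine .iSup _ fun k => ?_
  rw [← mul_assoc]
  induction k with
  | zero => simpa using hV.mul_phi h
  | succ k ih =>
    rw [pow_succ, ← mul_assoc]
    exact ih.mul_X ht

theorem Q.pow {I : Submodule K (FreeAlgebra K (Fin m))} (h2 : Ideal2 I)
    (k : ℕ) : Q n (Set.range (latticePow I)) (latticePow (⊤ * Phi n I * ⊤) k) := by
  have ht : (⊤ : Submodule K (FreeAlgebra K (Fin m))) ∈ Set.range (latticePow I) := ⟨0, rfl⟩
  have hmt : ∀ U ∈ Set.range (latticePow I), U * ⊤ ∈ Set.range (latticePow I) := by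
    rintro _ ⟨k, rfl⟩
    exact ⟨k, (h2.latticePow k).2.symm⟩
  have hmI : ∀ U ∈ Set.range (latticePow I), U * I ∈ Set.range (latticePow I) := by
    rintro _ ⟨k, rfl⟩
    refine ⟨k + 1, ?_⟩
    cases k with
    | zero => simp [latticePow, h2.1]
    | succ k => simp only [latticePow]; rw [pow_succ]
  have hJ : Ideal2 (⊤ * Phi n I * ⊤) := by
    refine ⟨?_, ?_⟩
    · rw [← mul_assoc, ← mul_assoc, top_mul_top]
    · rw [mul_assoc _ ⊤ ⊤, top_mul_top]
  induction k with
  | zero =>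
    have : (⊤ : Submodule K (FreeAlgebra K (Fin (m + n)))) = Phi n ⊤ * ⊤ := by
      symm
      rw [eq_top_iff]
      intro x _
      rw [← one_mul x]
      exact Submodule.mul_mem_mul ⟨1, trivial, map_one (phi K m n)⟩ trivial
    rw [latticePow, this]
    exact (Q.base _ ht).mul_top hmt ht
  | succ k ih =>
    have : latticePow (⊤ * Phi n I * ⊤) (k + 1) =
        latticePow (⊤ * Phi n I * ⊤) k * Phi n I * ⊤ := by
      cases k with
      | zero => simp [latticePow]
      | succ k =>
        have h3 := (hJ.latticePow (k + 1)).2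
        conv_rhs => rw [← h3]
        simp only [latticePow]
        rw [pow_succ _ (k + 1)]
        simp only [mul_assoc]
    rw [this]
    exact (ih.mul_phi hmI).mul_top hmt ht

/-- the possible slots -/
def slots (I : Submodule K (FreeAlgebra K (Fin m))) : Set (Submodule K (FreeAlgebra K (Fin m))) :=
  {U | ∃ x z M, (M = 1 ∨ M ∈ Set.range (latticePow I)) ∧ U = L1 K m ^ x * M * L1 K m ^ z}

theorem Q.L1_mul {I : Submodule K (FreeAlgebra K (Fin m))} (h : Q n (slots I) V) :
    Q n (slots I) (L1 K (m + n) * V) := by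
  rw [L1_add, Submodule.sup_mul]
  refine .sup _ _ (h.phi_mul ?_) ?_
  · rintro _ ⟨x, z, M, hM, rfl⟩
    exact ⟨x + 1, z, M, hM, by rw [pow_succ']; simp only [mul_assoc]⟩
  · have := Q.cons (S := slots I) 1 V (show 1 ∈ slots I from ⟨0, 0, 1, Or.inl rfl, by simp⟩) h
    rwa [Phi_one, one_mul] at this

theorem Q.mul_L1 {I : Submodule K (FreeAlgebra K (Fin m))} (h : Q n (slots I) V) :
    Q n (slots I) (V * L1 K (m + n)) := by
  rw [L1_add, Submodule.mul_sup]
  refine .sup _ _ (h.mul_phi ?_) ?_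
  · rintro _ ⟨x, z, M, hM, rfl⟩
    exact ⟨x, z + 1, M, hM, by rw [pow_succ]; simp only [mul_assoc]⟩
  · have := h.mul_X (W := 1) (show 1 ∈ slots I from ⟨0, 0, 1, Or.inl rfl, by simp⟩)
    rwa [Phi_one, mul_one] at this

theorem Q.gens {I : Submodule K (FreeAlgebra K (Fin m))} (h2 : Ideal2 I) (x y z : ℕ) :
    Q n (slots I) (L1 K (m + n) ^ x * latticePow (⊤ * Phi n I * ⊤) y * L1 K (m + n) ^ z) := by
  have h0 : Q n (slots I) (latticePow (⊤ * Phi n I * ⊤) y) := by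
    refine (Q.pow h2 y).mono ?_
    intro U hU
    exact ⟨0, 0, U, Or.inr hU, by simp⟩
  have h1 : Q n (slots I) (L1 K (m + n) ^ x * latticePow (⊤ * Phi n I * ⊤) y) := by
    induction x with
    | zero => simpa using h0
    | succ x ih => rw [pow_succ', mul_assoc]; exact ih.L1_mul
  induction z with
  | zero => simpa using h1
  | succ z ih => rw [pow_succ, ← mul_assoc]; exact ih.mul_L1

/-! The extension of a linear endomorphism. -/

/-- auxiliary recursion -/
def extAux (e : FreeAlgebra K (Fin m) →ₗ[K] FreeAlgebra K (Fin m)) :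
    List (Fin (m + n)) → List (Fin m) → FreeAlgebra K (Fin (m + n))
  | [], acc => phi K m n (e (word K acc))
  | i :: w, acc => Fin.addCases (motive := fun _ => FreeAlgebra K (Fin (m + n)))
      (fun k => extAux e w (acc ++ [k]))
      (fun j => phi K m n (e (word K acc)) * FreeAlgebra.ι K (Fin.natAdd m j) * extAux e w []) i

theorem extAux_nil (e : FreeAlgebra K (Fin m) →ₗ[K] FreeAlgebra K (Fin m)) (acc) :
    extAux (n := n) e [] acc = phi K m n (e (word K acc)) := by rw [extAux]

theorem extAux_left (e : FreeAlgebra K (Fin m) →ₗ[K] FreeAlgebra K (Fin m)) (k w acc) :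
    extAux (n := n) e (Fin.castAdd n k :: w) acc = extAux e w (acc ++ [k]) := by
  rw [extAux, Fin.addCases_left]

theorem extAux_right (e : FreeAlgebra K (Fin m) →ₗ[K] FreeAlgebra K (Fin m)) (j w acc) :
    extAux (n := n) e (Fin.natAdd m j :: w) acc =
      phi K m n (e (word K acc)) * FreeAlgebra.ι K (Fin.natAdd m j) * extAux e w [] := by
  rw [extAux, Fin.addCases_right]

/-- extension to the big algebra -/
def ext (n : ℕ) (e : FreeAlgebra K (Fin m) →ₗ[K] FreeAlgebra K (Fin m)) :
    FreeAlgebra K (Fin (m + n)) →ₗ[K] FreeAlgebra K (Fin (m + n)) :=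
  (wB K (m + n)).constr K fun w => extAux e w []

theorem ext_word (e : FreeAlgebra K (Fin m) →ₗ[K] FreeAlgebra K (Fin m)) (w) :
    ext n e (word K w) = extAux e w [] := by
  rw [← wB_apply, ext, Basis.constr_basis]

theorem phi_word (w : List (Fin m)) : phi K m n (word K w) = word K (w.map (Fin.castAdd n)) := by
  induction w with
  | nil => simp [word_nil]
  | cons i w ih => rw [word_cons, map_mul, ih, phi_ι, List.map_cons, word_cons]

theorem extAux_map (e : FreeAlgebra K (Fin m) →ₗ[K] FreeAlgebra K (Fin m)) (w : List (Fin m))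
    (v : List (Fin (m + n))) (acc) :
    extAux e (w.map (Fin.castAdd n) ++ v) acc = extAux e v (acc ++ w) := by
  induction w generalizing acc with
  | nil => simp
  | cons i w ih => rw [List.map_cons, List.cons_append, extAux_left, ih]; simp

theorem ext_phi (e : FreeAlgebra K (Fin m) →ₗ[K] FreeAlgebra K (Fin m)) (a) :
    ext n e (phi K m n a) = phi K m n (e a) := by
  have : ext n e ∘ₗ (phi K m n).toLinearMap = (phi K m n).toLinearMap ∘ₗ e := by
    refine (wB K m).ext fun w => ?_
    simp only [wB_apply, LinearMap.comp_apply, AlgHom.toLinearMap_apply]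
    rw [phi_word, ext_word]
    have := extAux_map (n := n) e w [] []
    rwa [List.append_nil, extAux_nil, List.nil_append] at this
  exact LinearMap.congr_fun this a

theorem ext_cons (e : FreeAlgebra K (Fin m) →ₗ[K] FreeAlgebra K (Fin m)) (a x l)
    (hx : x ∈ XX K m n) :
    ext n e (phi K m n a * x * l) = phi K m n (e a) * x * ext n e l := by
  induction hx using Submodule.span_induction with
  | mem x h =>
    obtain ⟨j, rfl⟩ := h
    have ha : a ∈ Submodule.span K (Set.range (word K (s := m))) := by rw [span_words]; trivial
    have hl : l ∈ Submodule.span K (Set.range (word K (s := m + n))) := by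
      rw [span_words]; trivial
    dsimp only
    induction ha using Submodule.span_induction with
    | mem a h =>
      obtain ⟨w, rfl⟩ := h
      induction hl using Submodule.span_induction with
      | mem l h =>
        obtain ⟨v, rfl⟩ := h
        rw [phi_word, mul_assoc, ← word_cons, ← word_append, ext_word, extAux_map, extAux_right,
          ext_word, List.nil_append]
      | zero => simp
      | add x y _ _ h1 h2 => simp only [mul_add, map_add, h1, h2]
      | smul r x _ h => simp only [mul_smul_comm, map_smul, h]
    | zero => simp
    | add x y _ _ h1 h2 => simp only [add_mul, map_add, h1, h2]
    | smul r x _ h => simp only [smul_mul_assoc, map_smul, h]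
  | zero => simp
  | add x y _ _ h1 h2 => simp only [mul_add, add_mul, map_add, h1, h2]
  | smul r x _ h => simp only [smul_mul_assoc, mul_smul_comm, map_smul, h]

theorem ext_comp (e e' : FreeAlgebra K (Fin m) →ₗ[K] FreeAlgebra K (Fin m))
    (h : ∀ a, e' (e a) = a) (x) : ext n e' (ext n e x) = x := by
  have key : ∀ (w : List (Fin (m + n))) (acc : List (Fin m)),
      ext n e' (extAux e w acc) = phi K m n (word K acc) * word K w := by
    intro w
    induction w with
    | nil => intro acc; rw [extAux_nil, ext_phi, h, word_nil, mul_one]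
    | cons i w ih =>
      intro acc
      refine Fin.addCases (fun k => ?_) (fun j => ?_) i
      · rw [extAux_left, ih, word_append, map_mul, word_cons, word_cons, word_nil, mul_one, phi_ι,
          mul_assoc]
      · rw [extAux_right, ext_cons _ _ _ _ (Submodule.subset_span ⟨j, rfl⟩), ih, h, word_nil,
          map_one, one_mul, word_cons, mul_assoc]
  have : ext n e' ∘ₗ ext n e = LinearMap.id := by
    refine (wB K (m + n)).ext fun w => ?_
    simp only [wB_apply, LinearMap.comp_apply, LinearMap.id_apply]
    rw [ext_word, key, word_nil, map_one, one_mul]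
  exact LinearMap.congr_fun this x

/-- extension of a linear automorphism -/
def extEquiv (n : ℕ) (e : FreeAlgebra K (Fin m) ≃ₗ[K] FreeAlgebra K (Fin m)) :
    FreeAlgebra K (Fin (m + n)) ≃ₗ[K] FreeAlgebra K (Fin (m + n)) :=
  { ext n e.toLinearMap with
    invFun := ext n e.symm.toLinearMap
    left_inv := fun x => ext_comp e.toLinearMap e.symm.toLinearMap
      (fun a => e.symm_apply_apply a) x
    right_inv := fun x => ext_comp e.symm.toLinearMap e.toLinearMap
      (fun a => e.apply_symm_apply a) x }

theorem map_ext_cons (e : FreeAlgebra K (Fin m) →ₗ[K] FreeAlgebra K (Fin m))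
    (U : Submodule K (FreeAlgebra K (Fin m))) (V : Submodule K (FreeAlgebra K (Fin (m + n)))) :
    (Phi n U * XX K m n * V).map (ext n e) = Phi n (U.map e) * XX K m n * V.map (ext n e) := by
  apply le_antisymm
  · rw [Submodule.map_le_iff_le_comap, mul_assoc, Submodule.mul_le]
    rintro _ ⟨a, ha, rfl⟩ y hy
    have : XX K m n * V ≤ ((Phi n (U.map e) * XX K m n * V.map (ext n e)).comap (ext n e)).comap
        (LinearMap.mulLeft K (phi K m n a)) := by
      rw [Submodule.mul_le]
      intro x hx l hl
      simp only [Submodule.mem_comap, LinearMap.mulLeft_apply]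
      rw [← mul_assoc, ext_cons _ _ _ _ hx]
      exact Submodule.mul_mem_mul (Submodule.mul_mem_mul ⟨_, ⟨a, ha, rfl⟩, rfl⟩ hx) ⟨l, hl, rfl⟩
    exact this hy
  · rw [mul_assoc, Submodule.mul_le]
    rintro _ ⟨_, ⟨a, ha, rfl⟩, rfl⟩ y hy
    have : XX K m n * V.map (ext n e) ≤ ((Phi n U * XX K m n * V).map (ext n e)).comap
        (LinearMap.mulLeft K (phi K m n (e a))) := by
      rw [Submodule.mul_le]
      rintro x hx _ ⟨l, hl, rfl⟩
      simp only [Submodule.mem_comap, LinearMap.mulLeft_apply]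
      rw [← mul_assoc, ← ext_cons _ _ _ _ hx]
      exact ⟨_, Submodule.mul_mem_mul (Submodule.mul_mem_mul ⟨a, ha, rfl⟩ hx) hl, rfl⟩
    exact this hy

/-- monomial subspaces -/
def Mon (U : Submodule K (FreeAlgebra K (Fin m))) : Prop :=
  ∃ T : Set (List (Fin m)), U = Submodule.span K (word K '' T)

theorem Mon.mul {U V : Submodule K (FreeAlgebra K (Fin m))} (hU : Mon U) (hV : Mon V) :
    Mon (U * V) := by
  obtain ⟨S, rfl⟩ := hU
  obtain ⟨T, rfl⟩ := hV
  refine ⟨Set.image2 (· ++ ·) S T, ?_⟩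
  rw [Submodule.span_mul_span, ← Set.image2_mul, Set.image2_image_left, Set.image2_image_right,
    Set.image_image2]
  simp only [word_append]

theorem Mon.phi {U : Submodule K (FreeAlgebra K (Fin m))} (hU : Mon U) : Mon (Phi n U) := by
  obtain ⟨S, rfl⟩ := hU
  refine ⟨(List.map (Fin.castAdd n)) '' S, ?_⟩
  rw [Phi, Submodule.map_span, ← Set.image_comp, ← Set.image_comp]
  congr 1
  exact Set.image_congr fun w _ => phi_word w

theorem mon_X : Mon (XX K m n) := by
  refine ⟨Set.range fun j : Fin n => [Fin.natAdd m j], ?_⟩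
  rw [XX, ← Set.range_comp]
  congr 2
  ext j
  simp [word]

theorem adapted_map_iff {b : Basis (List (Fin m)) K (FreeAlgebra K (Fin m))}
    {e : FreeAlgebra K (Fin m) →ₗ[K] FreeAlgebra K (Fin m)} (h : ∀ w, e (word K w) = b w)
    (U : Submodule K (FreeAlgebra K (Fin m))) :
    Adapted b U ↔ ∃ M, Mon M ∧ U = M.map e := by
  have h1 : ∀ T : Set (List (Fin m)), (Submodule.span K (word K '' T)).map e =
      Submodule.span K (b '' T) := by
    intro T
    rw [Submodule.map_span, ← Set.image_comp]
    congr 1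
    exact Set.image_congr fun w _ => h w
  constructor
  · rintro ⟨T, rfl⟩
    exact ⟨_, ⟨T, rfl⟩, (h1 T).symm⟩
  · rintro ⟨_, ⟨T, rfl⟩, rfl⟩
    exact ⟨T, h1 T⟩

theorem forward (I : Submodule K (FreeAlgebra K (Fin m))) (h2 : Ideal2 I) (hI : Hom I)
    (hd : IsDistributiveCollection (omegaGens K m I)) :
    IsDistributiveCollection (omegaGens K (m + n) (⊤ * Phi n I * ⊤)) := by
  obtain ⟨b, hb1, hb2⟩ := exists_basis I h2 hI hd
  let e : FreeAlgebra K (Fin m) ≃ₗ[K] FreeAlgebra K (Fin m) := (wB K m).equiv b (Equiv.refl _)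
  have he : ∀ w, e.toLinearMap (word K w) = b w := by
    intro w
    rw [← wB_apply]
    simp [e]
  let c := (wB K (m + n)).map (extEquiv n e)
  have hc : ∀ w, ext n e.toLinearMap (word K w) = c w := by
    intro w
    rw [← wB_apply]
    rfl
  have hslots : ∀ U ∈ slots I, Adapted b U := by
    rintro _ ⟨x, z, M, rfl | ⟨y, rfl⟩, rfl⟩
    · rw [mul_one, ← pow_add]; exact hb1 _
    · exact hb2 _ _ _
  have hJ : Ideal2 (⊤ * Phi n I * ⊤) := by
    refine ⟨?_, ?_⟩
    · rw [← mul_assoc, ← mul_assoc, top_mul_top]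
    · rw [mul_assoc _ ⊤ ⊤, top_mul_top]
  apply distrib_of_adapted c
  rintro _ ⟨x, y, z, rfl⟩
  rw [omega_gen_eq hJ]
  have hQ := Q.gens (n := n) h2 x y z
  generalize L1 K (m + n) ^ x * latticePow (⊤ * Phi n I * ⊤) y * L1 K (m + n) ^ z = Z at hQ ⊢
  induction hQ with
  | base U hU =>
    obtain ⟨M, hM, rfl⟩ := (adapted_map_iff he U).mp (hslots U hU)
    refine (adapted_map_iff hc _).mpr ⟨_, hM.phi (n := n), ?_⟩
    rw [Phi, Phi, ← Submodule.map_comp, ← Submodule.map_comp]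
    congr 1
    exact LinearMap.ext fun a => (ext_phi _ a).symm
  | cons U V hU _ ih =>
    obtain ⟨M, hM, rfl⟩ := (adapted_map_iff he U).mp (hslots U hU)
    obtain ⟨N, hN, rfl⟩ := (adapted_map_iff hc V).mp ih
    refine (adapted_map_iff hc _).mpr ⟨_, (hM.phi.mul mon_X).mul hN, ?_⟩
    rw [map_ext_cons]
  | sup U V _ _ h1 h2 => exact h1.sup h2
  | iSup U _ ih => exact Adapted.iSup ih

/-! The converse. -/

/-- killing the new variables -/
def ret (K : Type*) [Field K] (m n : ℕ) :
    FreeAlgebra K (Fin (m + n)) →ₐ[K] FreeAlgebra K (Fin m) :=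
  FreeAlgebra.lift K (Fin.addCases (motive := fun _ => FreeAlgebra K (Fin m))
    (fun k => FreeAlgebra.ι K k) (fun _ => 0))

theorem ret_phi (a : FreeAlgebra K (Fin m)) : ret K m n (phi K m n a) = a := by
  have : (ret K m n).comp (phi K m n) = AlgHom.id K _ := by
    ext k
    simp [ret]
  exact AlgHom.congr_fun this a

theorem map_ret_Phi (U : Submodule K (FreeAlgebra K (Fin m))) :
    (Phi n U).map (ret K m n).toLinearMap = U := by
  rw [Phi, ← Submodule.map_comp]
  have : (ret K m n).toLinearMap ∘ₗ (phi K m n).toLinearMap = LinearMap.id :=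
    LinearMap.ext fun a => ret_phi a
  rw [this, Submodule.map_id]

theorem map_ret_X : (XX K m n).map (ret K m n).toLinearMap = ⊥ := by
  rw [XX, Submodule.map_span, Submodule.span_eq_bot]
  rintro _ ⟨_, ⟨j, rfl⟩, rfl⟩
  simp [ret]

theorem map_ret_top : (⊤ : Submodule K (FreeAlgebra K (Fin (m + n)))).map
    (ret K m n).toLinearMap = ⊤ := by
  rw [eq_top_iff]
  intro a _
  exact ⟨phi K m n a, trivial, ret_phi a⟩

theorem map_ret_L1 : (L1 K (m + n)).map (ret K m n).toLinearMap = L1 K m := by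
  rw [L1_add, Submodule.map_sup, map_ret_Phi, map_ret_X, sup_bot_eq]

theorem map_latticePow_ret (U : Submodule K (FreeAlgebra K (Fin (m + n)))) (k : ℕ) :
    (latticePow U k).map (ret K m n).toLinearMap =
      latticePow (U.map (ret K m n).toLinearMap) k := by
  cases k with
  | zero => exact map_ret_top
  | succ k => exact Submodule.map_pow _ _ _

theorem pow_mono' {A : Type*} [Ring A] [Algebra K A] {U V : Submodule K A} (h : U ≤ V) (k : ℕ) :
    U ^ k ≤ V ^ k := by
  induction k with
  | zero => simp
  | succ k ih => rw [pow_succ, pow_succ]; exact mul_le_mul' ih h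

theorem Phi_latticePow_le {U : Submodule K (FreeAlgebra K (Fin m))}
    {V : Submodule K (FreeAlgebra K (Fin (m + n)))} (h : Phi n U ≤ V) (k : ℕ) :
    Phi n (latticePow U k) ≤ latticePow V k := by
  cases k with
  | zero => exact le_top
  | succ k =>
    simp only [latticePow]
    rw [Phi, Submodule.map_pow]
    exact pow_mono' h _

theorem backward (I : Submodule K (FreeAlgebra K (Fin m))) (h2 : Ideal2 I)
    (hd : IsDistributiveCollection (omegaGens K (m + n) (⊤ * Phi n I * ⊤))) :
    IsDistributiveCollection (omegaGens K m I) := by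
  have haug : (augIdeal K (m + n)).map (ret K m n).toLinearMap = augIdeal K m := by
    rw [augIdeal_eq_left, augIdeal_eq_left, Submodule.map_mul, map_ret_L1, map_ret_top]
  have haug' : Phi n (augIdeal K m) ≤ augIdeal K (m + n) := by
    rw [augIdeal_eq_left, augIdeal_eq_left, Phi_mul, L1_add]
    exact mul_le_mul' le_sup_left le_top
  have hJ : (⊤ * Phi n I * ⊤).map (ret K m n).toLinearMap = I := by
    rw [Submodule.map_mul, Submodule.map_mul, map_ret_top, map_ret_Phi, h2.1, h2.2]
  have hJ' : Phi n I ≤ ⊤ * Phi n I * ⊤ := by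
    intro x hx
    rw [← one_mul x, ← mul_one (1 * x)]
    exact Submodule.mul_mem_mul (Submodule.mul_mem_mul trivial hx) trivial
  have key : ∀ a ∈ sublatticeGen (omegaGens K m I),
      ∃ a' ∈ sublatticeGen (omegaGens K (m + n) (⊤ * Phi n I * ⊤)),
        a'.map (ret K m n).toLinearMap = a ∧ Phi n a ≤ a' := by
    refine sublatticeGen_induction ?_ ?_ ?_
    · rintro _ ⟨x, y, z, rfl⟩
      refine ⟨_, subset_gen ⟨x, y, z, rfl⟩, ?_, ?_⟩
      · rw [Submodule.map_mul, Submodule.map_mul, map_latticePow_ret, map_latticePow_ret,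
          map_latticePow_ret, haug, hJ]
      · rw [Phi_mul, Phi_mul]
        exact mul_le_mul' (mul_le_mul' (Phi_latticePow_le haug' x)
          (Phi_latticePow_le hJ' y)) (Phi_latticePow_le haug' z)
    · rintro a b ⟨a', ha, hae, hal⟩ ⟨b', hb, hbe, hbl⟩
      have hle : Phi n (a ⊓ b) ≤ a' ⊓ b' :=
        le_inf ((Submodule.map_mono inf_le_left).trans hal)
          ((Submodule.map_mono inf_le_right).trans hbl)
      refine ⟨a' ⊓ b', inf_gen ha hb, le_antisymm ?_ ?_, hle⟩
      · rw [← hae, ← hbe]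
        exact le_inf (Submodule.map_mono inf_le_left) (Submodule.map_mono inf_le_right)
      · conv_lhs => rw [← map_ret_Phi (n := n) (a ⊓ b)]
        exact Submodule.map_mono hle
    · rintro a b ⟨a', ha, hae, hal⟩ ⟨b', hb, hbe, hbl⟩
      refine ⟨a' ⊔ b', sup_gen ha hb, ?_, ?_⟩
      · rw [Submodule.map_sup, hae, hbe]
      · rw [Phi, Submodule.map_sup]
        exact sup_le_sup hal hbl
  have hinf : ∀ a b a' b', Submodule.map (ret K m n).toLinearMap a' = a →
      Submodule.map (ret K m n).toLinearMap b' = b → Phi n a ≤ a' → Phi n b ≤ b' →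
      (a' ⊓ b').map (ret K m n).toLinearMap = a ⊓ b := by
    intro a b a' b' hae hbe hal hbl
    have hle : Phi n (a ⊓ b) ≤ a' ⊓ b' :=
      le_inf ((Submodule.map_mono inf_le_left).trans hal)
        ((Submodule.map_mono inf_le_right).trans hbl)
    apply le_antisymm
    · rw [← hae, ← hbe]
      exact le_inf (Submodule.map_mono inf_le_left) (Submodule.map_mono inf_le_right)
    · conv_lhs => rw [← map_ret_Phi (n := n) (a ⊓ b)]
      exact Submodule.map_mono hle
  intro a ha b hb c hc
  obtain ⟨a', ha', hae, hal⟩ := key a ha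
  obtain ⟨b', hb', hbe, hbl⟩ := key b hb
  obtain ⟨c', hc', hce, hcl⟩ := key c hc
  have h := congrArg (Submodule.map (ret K m n).toLinearMap) (hd a' ha' b' hb' c' hc')
  rw [Submodule.map_sup, hinf a b a' b' hae hbe hal hbl, hinf a c a' c' hae hce hal hcl] at h
  rw [← h, hinf a (b ⊔ c) a' (b' ⊔ c') hae (by rw [Submodule.map_sup, hbe, hce]) hal
    (by rw [Phi, Submodule.map_sup]; exact sup_le_sup hbl hcl)]

end OmegaProof
/-- Let `L^t = K⟨t₁,…,tₘ⟩ ⊆ L = K⟨t₁,…,tₘ,x₁,…,xₙ⟩` be free algebras,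
`I` a two-sided ideal of `L^t` generated by homogeneous elements of degree 2 and `⟨I⟩`
the two-sided ideal of `L` generated by `I`. Then the lattice `Ω(L^t, I)` is distributive
iff the lattice `Ω(L, ⟨I⟩)` is distributive. -/
theorem omega_distributive_iff_extension
    {K : Type*} [Field K] (m n : ℕ)
    (I : Submodule K (FreeAlgebra K (Fin m)))
    (hI : ∃ S : Set (FreeAlgebra K (Fin m)),
      (∀ g ∈ S, g ∈ wordLengthComponent K m 2) ∧ I = twoSidedSpan K S) :
    IsDistributiveCollection (omegaGens K m I) ↔
      IsDistributiveCollection (omegaGens K (m + n)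
        (twoSidedSpan K
          ((FreeAlgebra.lift K fun k : Fin m => FreeAlgebra.ι K (Fin.castAdd n k)) ''
            (I : Set (FreeAlgebra K (Fin m)))))) := by
  obtain ⟨S, hS, rfl⟩ := hI
  have h2 := OmegaProof.ideal2_twoSidedSpan S
  have hH : OmegaProof.Hom (twoSidedSpan K S) := by
    rw [OmegaProof.twoSidedSpan_eq]
    exact (OmegaProof.hom_top.mul ⟨S, fun g hg => ⟨2, hS g hg⟩, rfl⟩).mul OmegaProof.hom_top
  rw [OmegaProof.twoSidedSpan_eq
    ((FreeAlgebra.lift K fun k : Fin m => FreeAlgebra.ι K (Fin.castAdd n k)) ''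
      (twoSidedSpan K S : Set (FreeAlgebra K (Fin m))))]
  have he : Submodule.span K
      ((FreeAlgebra.lift K fun k : Fin m => FreeAlgebra.ι K (Fin.castAdd n k)) ''
        (twoSidedSpan K S : Set (FreeAlgebra K (Fin m)))) =
      OmegaProof.Phi n (twoSidedSpan K S) :=
    Submodule.span_eq (OmegaProof.Phi n (twoSidedSpan K S))
  rw [he]
  exact ⟨OmegaProof.forward _ h2 hH, OmegaProof.backward _ h2⟩
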